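/- Let α ∈ (0,1) and β, γ ∈ (0,1) with β + γ = 1, and define δ = (2γ + αβ − αγ − √(α(4βγ + αβ² + αγ² − 2αβγ)))/(2γ). Then for all m, n ∈ [0,1) with (1 − m)·(1 − n) ≥ α, one has m^β · n^γ ≤ (1 − α/(1−δ))^β · δ^γ. -/

import Mathlib

/-!
Set `δ = tangencyPoint α β γ`. The point `(1 - α / (1 - δ), δ)` lies on the hyperbola
`(1 - m) * (1 - n) = α`, and `δ` is chosen so that there the gradient of `β * log m + γ * log n` is
a positive multiple of the normal `(1 - n, 1 - m)` of the hyperbola. The feasible part of the unit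
square is convex, so it lies on one side of the common tangent line, and
`β * log m + γ * log n` is concave, so on that side it does not exceed its value at the point of
tangency.
-/

open Real

lemma two_mul_mul_le_add_of_mul_le_mul {R : Type*} [CommRing R] [LinearOrder R]
    [IsStrictOrderedRing R] {a b p q : R} (ha : 0 ≤ a) (hb : 0 ≤ b) (hp : 0 ≤ p) (hq : 0 ≤ q)
    (h : a * b ≤ p * q) : 2 * (a * b) ≤ p * b + q * a := by
  refine le_of_sq_le_sq ?_ (by positivity)
  calc (2 * (a * b)) ^ 2 = 4 * (a * b) * (a * b) := by ring
    _ ≤ 4 * (a * b) * (p * q) := by gcongr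
    _ = 4 * (p * b) * (q * a) := by ring
    _ ≤ (p * b + q * a) ^ 2 := four_mul_le_sq_add _ _

lemma rpow_le_rpow_mul_exp {x a w : ℝ} (hx : 0 ≤ x) (ha : 0 < a) (hw : 0 ≤ w) :
    x ^ w ≤ a ^ w * exp (w * (x / a - 1)) := by
  have ratio_le : x / a ≤ exp (x / a - 1) := by simpa using add_one_le_exp (x / a - 1)
  calc x ^ w = a ^ w * (x / a) ^ w := by
        rw [← mul_rpow ha.le (by positivity), mul_div_cancel₀ _ ha.ne']
    _ ≤ a ^ w * exp (x / a - 1) ^ w := by gcongr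
    _ = a ^ w * exp (w * (x / a - 1)) := by rw [← exp_mul, mul_comm w]

lemma rpow_mul_rpow_le_of_mul_div_add_le {x y a b v w : ℝ} (hx : 0 ≤ x) (hy : 0 ≤ y)
    (ha : 0 < a) (hb : 0 < b) (hv : 0 ≤ v) (hw : 0 ≤ w)
    (h : v * (x / a) + w * (y / b) ≤ v + w) : x ^ v * y ^ w ≤ a ^ v * b ^ w := by
  calc x ^ v * y ^ w
      ≤ (a ^ v * exp (v * (x / a - 1))) * (b ^ w * exp (w * (y / b - 1))) := by
        gcongr <;> exact rpow_le_rpow_mul_exp ‹_› ‹_› ‹_›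
    _ = a ^ v * b ^ w * exp (v * (x / a - 1) + w * (y / b - 1)) := by rw [exp_add]; ring
    _ ≤ a ^ v * b ^ w := mul_le_of_le_one_right (by positivity) (exp_le_one_iff.2 (by linarith))

/-- The hypotheses `hβ` and `hγ` are the Lagrange conditions `β / M = μ * (1 - N)` and
`γ / N = μ * (1 - M)` with the denominators cleared. -/
lemma rpow_mul_rpow_le_of_stationary {β γ μ m n M N : ℝ} (hμ : 0 ≤ μ)
    (hM : M ∈ Set.Ioc 0 1) (hN : N ∈ Set.Ioc 0 1) (hβ : β = μ * (M * (1 - N)))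
    (hγ : γ = μ * (N * (1 - M))) (hm : m ∈ Set.Icc 0 1) (hn : n ∈ Set.Icc 0 1)
    (h : (1 - M) * (1 - N) ≤ (1 - m) * (1 - n)) : m ^ β * n ^ γ ≤ M ^ β * N ^ γ := by
  obtain ⟨hM₀, hM₁⟩ := hM
  obtain ⟨hN₀, hN₁⟩ := hN
  rw [← sub_nonneg] at hM₁ hN₁
  have tangent_line : 0 ≤ (M - m) * (1 - N) + (N - n) * (1 - M) := by
    linarith [two_mul_mul_le_add_of_mul_le_mul hM₁ hN₁ (sub_nonneg.2 hm.2) (sub_nonneg.2 hn.2) h]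
  have gap : β + γ - (β * (m / M) + γ * (n / N))
      = μ * ((M - m) * (1 - N) + (N - n) * (1 - M)) := by
    rw [hβ, hγ]; field_simp; ring
  refine rpow_mul_rpow_le_of_mul_div_add_le hm.1 hn.1 hM₀ hN₀ ?_ ?_ ?_
  · rw [hβ]; positivity
  · rw [hγ]; positivity
  · linarith [mul_nonneg hμ tangent_line]

/-- The second coordinate `n` of the point at which a level curve of `β * log m + γ * log n`
touches the hyperbola `(1 - m) * (1 - n) = α`; the first coordinate is `1 - α / (1 - n)`. -/
noncomputable def tangencyPoint (α β γ : ℝ) : ℝ :=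
  (2 * γ + α * β - α * γ - √(α * (4 * β * γ + α * β ^ 2 + α * γ ^ 2 - 2 * α * β * γ))) / (2 * γ)

section TangencyPoint

variable {α β γ : ℝ}

lemma one_sub_tangencyPoint (hγ : γ ≠ 0) :
    1 - tangencyPoint α β γ =
      (-(α * (β - γ)) + √(discrim γ (α * (β - γ)) (-(α * β)))) / (2 * γ) := by
  have disc : discrim γ (α * (β - γ)) (-(α * β))
      = α * (4 * β * γ + α * β ^ 2 + α * γ ^ 2 - 2 * α * β * γ) := by
    rw [discrim]; ring
  rw [disc, tangencyPoint]
  field_simp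
  ring

lemma tangencyPoint_lt_one (hα : 0 < α) (hβ : 0 < β) (hγ : 0 < γ) :
    tangencyPoint α β γ < 1 := by
  rw [← sub_pos, one_sub_tangencyPoint hγ.ne']
  have lt_sqrt_disc : α * (β - γ) < √(discrim γ (α * (β - γ)) (-(α * β))) := by
    refine lt_sqrt_of_sq_lt ?_
    rw [discrim]
    linarith [mul_pos hγ (mul_pos hα hβ)]
  exact div_pos (by linarith) (by positivity)

lemma tangencyPoint_stationary (hα : 0 ≤ α) (hβ : 0 ≤ β) (hγ : 0 < γ) :
    γ * ((1 - tangencyPoint α β γ) * (1 - tangencyPoint α β γ - α))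
      = β * (α * tangencyPoint α β γ) := by
  have disc_nonneg : 0 ≤ discrim γ (α * (β - γ)) (-(α * β)) := by
    rw [discrim]
    linarith [sq_nonneg (α * (β - γ)), mul_nonneg hγ.le (mul_nonneg hα hβ)]
  have root := (quadratic_eq_zero_iff hγ.ne' (mul_self_sqrt disc_nonneg).symm
    (1 - tangencyPoint α β γ)).2 (.inl (one_sub_tangencyPoint hγ.ne'))
  linear_combination root

lemma tangencyPoint_mem_Ioo (hα : α ∈ Set.Ioo 0 1) (hβ : 0 < β) (hγ : 0 < γ) :
    tangencyPoint α β γ ∈ Set.Ioo 0 (1 - α) := by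
  obtain ⟨hα₀, hα₁⟩ := hα
  have stationary := tangencyPoint_stationary hα₀.le hβ.le hγ
  have one_sub_pos := sub_pos.2 (tangencyPoint_lt_one hα₀ hβ hγ)
  set δ := tangencyPoint α β γ
  -- The factors `1 - δ - α` and `δ` of `stationary` have the same sign and the sum `1 - α > 0`.
  have pos_iff : 0 < 1 - δ - α ↔ 0 < δ := by
    rw [← mul_pos_iff_of_pos_left one_sub_pos, ← mul_pos_iff_of_pos_left hγ, stationary,
      mul_pos_iff_of_pos_left hβ, mul_pos_iff_of_pos_left hα₀]
  have δ_pos : 0 < δ := by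
    by_contra! δ_nonpos
    exact δ_nonpos.not_gt (pos_iff.1 (by linarith))
  exact ⟨δ_pos, by linarith [pos_iff.2 δ_pos]⟩

end TangencyPoint

theorem tangent_cut_is_relaxation_general {α β γ m n : ℝ} (hα : α ∈ Set.Ioo 0 1) (hβ : 0 < β)
    (hγ : 0 < γ) (hm : m ∈ Set.Icc 0 1) (hn : n ∈ Set.Icc 0 1) (h : α ≤ (1 - m) * (1 - n)) :
    m ^ β * n ^ γ ≤
      (1 - α / (1 - tangencyPoint α β γ)) ^ β * tangencyPoint α β γ ^ γ := by
  obtain ⟨δ_pos, δ_lt⟩ := tangencyPoint_mem_Ioo hα hβ hγ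
  have stationary := tangencyPoint_stationary hα.1.le hβ.le hγ
  generalize tangencyPoint α β γ = δ at *
  have gap_pos : 0 < 1 - δ - α := by linarith
  have one_sub_pos : 0 < 1 - δ := by linarith [hα.1]
  have ratio_lt_one : α / (1 - δ) < 1 := (div_lt_one one_sub_pos).2 (by linarith)
  have ratio_pos : 0 < α / (1 - δ) := div_pos hα.1 one_sub_pos
  refine rpow_mul_rpow_le_of_stationary (μ := β / (1 - δ - α)) (by positivity)
    ⟨by linarith, by linarith⟩ ⟨δ_pos, by linarith⟩ ?_ ?_ hm hn ?_
  · field_simp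
  · field_simp
    linear_combination stationary
  · simpa [one_sub_pos.ne'] using h

/-- For `α ∈ (0,1)`, `β, γ ∈ (0,1)` with `β + γ = 1` and the tangency point
`δ = (2γ + αβ − αγ − √(α(4βγ + αβ² + αγ² − 2αβγ))) / (2γ)`:
every `m, n ∈ [0,1)` with `(1 − m)(1 − n) ≥ α` satisfy the tangent cut
`m^β * n^γ ≤ (1 − α/(1−δ))^β * δ^γ` (real powers). -/
theorem tangent_cut_is_relaxation
    (α β γ : ℝ) (hα : α ∈ Set.Ioo (0 : ℝ) 1)
    (hβ : β ∈ Set.Ioo (0 : ℝ) 1) (hγ : γ ∈ Set.Ioo (0 : ℝ) 1)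
    (hβγ : β + γ = 1) :
    ∀ m ∈ Set.Ico (0 : ℝ) 1, ∀ n ∈ Set.Ico (0 : ℝ) 1,
      (1 - m) * (1 - n) ≥ α →
      m ^ β * n ^ γ ≤
        (1 - α / (1 -
            (2 * γ + α * β - α * γ -
              Real.sqrt (α * (4 * β * γ + α * β ^ 2 + α * γ ^ 2 - 2 * α * β * γ))) /
            (2 * γ))) ^ β *
          ((2 * γ + α * β - α * γ -
              Real.sqrt (α * (4 * β * γ + α * β ^ 2 + α * γ ^ 2 - 2 * α * β * γ))) /
            (2 * γ)) ^ γ :=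
  fun _ hm _ hn h => tangent_cut_is_relaxation_general hα hβ.1 hγ.1
    (Set.Ico_subset_Icc_self hm) (Set.Ico_subset_Icc_self hn) h
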